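/- Let d ∈ ℕ, α ∈ (1, 2), K ∈ ℝ and p > 0. Let H: ℝ^d → ℝ be continuous, differentiable on ℝ^d∖{0}, and positively homogeneous of degree α (H(λx) = λ^α·H(x) for all λ > 0 and x ∈ ℝ^d). Set H_K(x) = H(x) + (1/2)K|x|² and H_{pK}(x) = H(x) + (1/2)pK|x|², and assume both are convex on ℝ^d. Let ξ ∈ ℝ^d∖{0} and y = ∇H_K(ξ). Then ∇H_{pK}(p^{1/(α−2)}·ξ) = p^{(α−1)/(α−2)}·y, and the Fenchel conjugates H_L*(w) := sup_{x ∈ ℝ^d}((x, w) − H_L(x)) satisfy H_{pK}*(p^{(α−1)/(α−2)}·y) = p^{α/(α−2)}·H_K*(y). -/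

import Mathlib

open RealInnerProductSpace

/-- The Fenchel conjugate `H*(y) = sup_x (⟪x, y⟫ - H x)` of a function on
`ℝ^d`. -/
noncomputable def fenchelConj (d : ℕ) (H : EuclideanSpace ℝ (Fin d) → ℝ)
    (y : EuclideanSpace ℝ (Fin d)) : ℝ :=
  ⨆ x : EuclideanSpace ℝ (Fin d), (⟪x, y⟫ - H x)

/-- The scaling computation (4.7)–(4.8) behind the `p`-th iteration map: for a
Hamiltonian `H` positively homogeneous of degree `α ∈ (1,2)`, the gradients and
Fenchel conjugates of `H_K = H + (1/2)K|·|²` and `H_{pK} = H + (1/2)pK|·|²`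
scale as stated. -/
theorem iteration_scaling_of_fenchel_conjugate
    (d : ℕ) (α K p : ℝ) (hα : α ∈ Set.Ioo (1:ℝ) 2) (hp : 0 < p)
    (H : EuclideanSpace ℝ (Fin d) → ℝ) (hHc : Continuous H)
    (hHd : ∀ x : EuclideanSpace ℝ (Fin d), x ≠ 0 → DifferentiableAt ℝ H x)
    (hhom : ∀ lam : ℝ, 0 < lam → ∀ x, H (lam • x) = lam ^ α * H x)
    (hconvK : ConvexOn ℝ Set.univ (fun x => H x + (1/2) * K * ‖x‖ ^ 2))
    (hconvpK : ConvexOn ℝ Set.univ (fun x => H x + (1/2) * (p * K) * ‖x‖ ^ 2))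
    (ξ : EuclideanSpace ℝ (Fin d)) (hξ : ξ ≠ 0)
    (y : EuclideanSpace ℝ (Fin d))
    (hy : y = gradient (fun x => H x + (1/2) * K * ‖x‖ ^ 2) ξ) :
    gradient (fun x => H x + (1/2) * (p * K) * ‖x‖ ^ 2)
        ((p ^ ((1:ℝ) / (α - 2))) • ξ) = (p ^ ((α - 1) / (α - 2))) • y ∧
    fenchelConj d (fun x => H x + (1/2) * (p * K) * ‖x‖ ^ 2)
        ((p ^ ((α - 1) / (α - 2))) • y)
      = p ^ (α / (α - 2)) * fenchelConj d (fun x => H x + (1/2) * K * ‖x‖ ^ 2) y := by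
  obtain ⟨h1, h2⟩ := hα
  have hne : α - 2 ≠ 0 := by linarith
  set c : ℝ := p ^ ((1:ℝ) / (α - 2)) with hc
  have hc0 : 0 < c := Real.rpow_pos_of_pos hp _
  have e1 : p ^ (α / (α - 2)) = c ^ α := by
    rw [hc, ← Real.rpow_mul hp.le]; congr 1; ring
  have e2 : p ^ ((α - 1) / (α - 2)) = c ^ α * c⁻¹ := by
    rw [← e1, hc, ← Real.rpow_neg hp.le, ← Real.rpow_add hp]; congr 1; ring
  have e3 : p * c ^ 2 = c ^ α := by
    rw [← e1, hc, ← Real.rpow_natCast, ← Real.rpow_mul hp.le]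
    nth_rewrite 1 [← Real.rpow_one p]
    rw [← Real.rpow_add hp]; congr 1; push_cast; field_simp; ring
  have key : ∀ x, H (c • x) + (1/2) * (p * K) * ‖c • x‖ ^ 2
      = c ^ α * (H x + (1/2) * K * ‖x‖ ^ 2) := by
    intro x
    rw [hhom c hc0, norm_smul, Real.norm_of_nonneg hc0.le, ← e3]; ring
  rw [e1, e2]
  constructor
  · have hF : DifferentiableAt ℝ (fun x => H x + (1/2) * K * ‖x‖ ^ 2) ξ :=
      (hHd ξ hξ).add (((differentiableAt_id).norm_sq ℝ).const_mul _)
    have hg := hF.hasGradientAt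
    rw [← hy] at hg
    have hg1 := hg.hasFDerivAt
    have hs : HasFDerivAt (fun x : EuclideanSpace ℝ (Fin d) => c⁻¹ • x)
        (c⁻¹ • ContinuousLinearMap.id ℝ (EuclideanSpace ℝ (Fin d))) (c • ξ) :=
      (hasFDerivAt_id (𝕜 := ℝ) (c • ξ)).const_smul c⁻¹
    have hx : ξ = c⁻¹ • (c • ξ) := by rw [inv_smul_smul₀ hc0.ne']
    rw [hx] at hg1
    have h3 := (hg1.comp (c • ξ) hs).const_mul (c ^ α)
    have hfun : (fun x => H x + (1/2) * (p * K) * ‖x‖ ^ 2)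
        = fun x => c ^ α * ((fun x => H x + (1/2) * K * ‖x‖ ^ 2) ∘ fun x => c⁻¹ • x) x := by
      funext x
      have := key (c⁻¹ • x)
      rw [smul_inv_smul₀ hc0.ne'] at this
      exact this
    rw [hfun]
    apply HasGradientAt.gradient
    rw [hasGradientAt_iff_hasFDerivAt]
    refine h3.congr_fderiv ?_
    ext v
    simp [inner_smul_left, mul_assoc]
  · unfold fenchelConj
    rw [Real.mul_iSup_of_nonneg (Real.rpow_nonneg hc0.le _)]
    have hsurj : Function.Surjective (fun x : EuclideanSpace ℝ (Fin d) => c • x) :=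
      fun x => ⟨c⁻¹ • x, smul_inv_smul₀ hc0.ne' x⟩
    rw [← hsurj.iSup_comp]
    congr 1
    funext x
    simp only [key]
    rw [real_inner_smul_left, real_inner_smul_right]
    field_simp
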